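/- Let f be a homogeneous cubic polynomial on V and G = {g ∈ GL(V) : f ∘ g = χ(g)·f for some scalar χ(g) ≠ 0} the group of linear symmetries of {f = 0}. If f admits a polynomial multiplicative Legendre transform f_* (so that τ_{f,A} is invertible for f(A) ≠ 0, with inverse τ_{f_*, f'(A)/f(A)}), then for any A, A' with f(A) ≠ 0 ≠ f(A'), the composite (τ_{f,A'})^{-1} ∘ τ_{f,A} ∈ GL(V) maps the affine cone over {f = 0} to itself, i.e., lies in G. -/

import Mathlib

/-!
Write `x♯ = f'(x)` and `ξ♯ = f_*'(ξ)`. Differentiating `f_*(x♯) = f(x)²` gives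
`f_*'(x♯) = f(x) x`, which is the adjoint identity `x♯♯ = f(x) x` of cubic Jordan algebras. As
there, its first two linearizations yield `f_*(f''(A) x) = f'(A)x · f'(x)A - f(A) f(x)`, and
expanding `f_*` at `τ_{f,A} x = f(A)⁻¹ f''(A) x - f(A)⁻² (f'(A)x) f'(A)` leaves
`f_*(τ_{f,A} x) = -f(A)⁻² f(x)`. Hence `(τ_{f,A'})⁻¹ ∘ τ_{f,A}` multiplies `f` by
`(f(A') / f(A))²`.
-/

open scoped Topology

section Homogeneous

variable {𝕜 E F : Type*} [NontriviallyNormedField 𝕜] [NormedAddCommGroup E] [NormedSpace 𝕜 E]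
  [NormedAddCommGroup F] [NormedSpace 𝕜 F] {φ : E → F} {k : ℕ}

theorem hasDerivAt_comp_smul {t : 𝕜} {x : E} (hφ : DifferentiableAt 𝕜 φ (t • x)) :
    HasDerivAt (fun s : 𝕜 => φ (s • x)) (fderiv 𝕜 φ (t • x) x) t := by
  have hline : HasDerivAt (fun s : 𝕜 => s • x) x t := by
    simpa using (hasDerivAt_id t).smul_const x
  exact hφ.hasFDerivAt.comp_hasDerivAt t hline

variable (𝕜) in
/-- Homogeneity of degree `k` of a map between vector spaces. Only nonzero scalars are tested, so
that the derivative of a map homogeneous of degree `k + 1` is homogeneous of degree `k` even for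
`k = 0`, without a continuity assumption. -/
def IsHomogeneousMap (k : ℕ) (φ : E → F) : Prop :=
  ∀ c : 𝕜, c ≠ 0 → ∀ x, φ (c • x) = c ^ k • φ x

namespace IsHomogeneousMap

protected theorem fderiv (h : IsHomogeneousMap 𝕜 (k + 1) φ) (hφ : Differentiable 𝕜 φ) :
    IsHomogeneousMap 𝕜 k (fderiv 𝕜 φ) := by
  intro c hc x
  have hcomp : HasFDerivAt (fun y => φ (c • y))
      ((fderiv 𝕜 φ (c • x)).comp (c • ContinuousLinearMap.id 𝕜 E)) x :=
    (hφ (c • x)).hasFDerivAt.comp x ((hasFDerivAt_id x).const_smul c)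
  have hpow : HasFDerivAt (fun y => φ (c • y)) (c ^ (k + 1) • fderiv 𝕜 φ x) x := by
    simpa only [h c hc] using! (hφ x).hasFDerivAt.const_smul (c ^ (k + 1))
  ext y
  have hy := DFunLike.congr_fun (hcomp.unique hpow) y
  simp only [ContinuousLinearMap.comp_apply, smul_apply, ContinuousLinearMap.id_apply, map_smul,
    pow_succ', mul_smul] at hy
  exact smul_right_injective F hc hy

theorem fderiv_apply_self (h : IsHomogeneousMap 𝕜 k φ) (hφ : Differentiable 𝕜 φ) (x : E) :
    fderiv 𝕜 φ x x = (k : 𝕜) • φ x := by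
  have hφx : HasDerivAt (fun t : 𝕜 => φ (t • x)) (fderiv 𝕜 φ x x) 1 := by
    simpa using hasDerivAt_comp_smul (hφ ((1 : 𝕜) • x))
  have hpow : HasDerivAt (fun t : 𝕜 => t ^ k • φ x) ((k : 𝕜) • φ x) 1 := by
    simpa using (hasDerivAt_pow k (1 : 𝕜)).smul_const (φ x)
  refine hφx.unique (hpow.congr_of_eventuallyEq ?_)
  filter_upwards [eventually_ne_nhds one_ne_zero] with t ht using h t ht x

theorem fderiv_zero_apply (h : IsHomogeneousMap 𝕜 1 φ) (hφ : Differentiable 𝕜 φ) (x : E) :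
    fderiv 𝕜 φ 0 x = φ x := by
  have hφ₀ : φ 0 = 0 := by simpa using (h.fderiv_apply_self hφ 0).symm
  have hline : HasDerivAt (fun t : 𝕜 => φ (t • x)) (fderiv 𝕜 φ 0 x) 0 := by
    simpa using hasDerivAt_comp_smul (hφ ((0 : 𝕜) • x))
  have hlin : (fun t : 𝕜 => φ (t • x)) = fun t => t • φ x := by
    ext t
    rcases eq_or_ne t 0 with rfl | ht
    · simp [hφ₀]
    · simpa using h t ht x
  rw [hlin] at hline
  exact hline.unique (by simpa using (hasDerivAt_id (0 : 𝕜)).smul_const (φ x))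

end IsHomogeneousMap

end Homogeneous

section Cubic

variable {𝕜 E : Type*} [NontriviallyNormedField 𝕜] [NormedAddCommGroup E] [NormedSpace 𝕜 E]
  {f : E → 𝕜}

variable (𝕜) in
/-- Homogeneous cubic polynomials on a normed space, encoded as the analytic functions homogeneous
of degree three. -/
structure IsCubicForm (f : E → 𝕜) : Prop where
  contDiff : ContDiff 𝕜 ⊤ f
  homogeneous : IsHomogeneousMap 𝕜 3 f

variable (𝕜) in
/-- The polarization of a cubic form `f`, i.e. the symmetric trilinear form `B` with
`B x x x = 6 f(x)`, encoded as the third derivative of `f` at the origin. -/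
noncomputable def polarization (f : E → 𝕜) : E →L[𝕜] E →L[𝕜] E →L[𝕜] 𝕜 :=
  fderiv 𝕜 (fderiv 𝕜 (fderiv 𝕜 f)) 0

variable (𝕜) in
/-- The logarithmic derivative `f' / f`; it takes the junk value `0` where `f` vanishes. -/
noncomputable def logGradient (f : E → 𝕜) (x : E) : E →L[𝕜] 𝕜 :=
  (f x)⁻¹ • fderiv 𝕜 f x

variable (𝕜) in
/-- The map `τ_{f,A}`, the derivative at `A` of the logarithmic derivative `f' / f`. -/
noncomputable def tau (f : E → 𝕜) (A : E) : E →L[𝕜] E →L[𝕜] 𝕜 :=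
  fderiv 𝕜 (logGradient 𝕜 f) A

namespace IsCubicForm

theorem differentiable (hf : IsCubicForm 𝕜 f) : Differentiable 𝕜 f :=
  hf.contDiff.differentiable WithTop.top_ne_zero

theorem fderiv_apply_self (hf : IsCubicForm 𝕜 f) (x : E) : fderiv 𝕜 f x x = 3 * f x := by
  simpa using hf.homogeneous.fderiv_apply_self hf.differentiable x

theorem contDiff_fderiv (hf : IsCubicForm 𝕜 f) : ContDiff 𝕜 ⊤ (fderiv 𝕜 f) :=
  hf.contDiff.fderiv_right le_top

theorem fderiv_fderiv (hf : IsCubicForm 𝕜 f) :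
    fderiv 𝕜 (fderiv 𝕜 f) = polarization 𝕜 f := by
  have hf₁ := hf.contDiff_fderiv.differentiable WithTop.top_ne_zero
  have hf₂ : Differentiable 𝕜 (fderiv 𝕜 (fderiv 𝕜 f)) :=
    (hf.contDiff_fderiv.fderiv_right (m := ⊤) le_top).differentiable WithTop.top_ne_zero
  have hhom := (hf.homogeneous.fderiv hf.differentiable).fderiv hf₁
  ext1 x
  exact (hhom.fderiv_zero_apply hf₂ x).symm

theorem hasFDerivAt_fderiv (hf : IsCubicForm 𝕜 f) (x : E) :
    HasFDerivAt (fderiv 𝕜 f) (polarization 𝕜 f x) x := by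
  rw [← hf.fderiv_fderiv]
  exact (hf.contDiff_fderiv.differentiable WithTop.top_ne_zero x).hasFDerivAt

theorem polarization_comm (hf : IsCubicForm 𝕜 f) (x y : E) :
    polarization 𝕜 f x y = polarization 𝕜 f y x :=
  (hf.contDiff_fderiv.contDiffAt.isSymmSndFDerivAt le_top).eq x y

theorem polarization_apply_comm (hf : IsCubicForm 𝕜 f) (x y z : E) :
    polarization 𝕜 f x y z = polarization 𝕜 f x z y := by
  rw [← hf.fderiv_fderiv]
  exact (hf.contDiff.contDiffAt.isSymmSndFDerivAt le_top).eq y z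

theorem polarization_self (hf : IsCubicForm 𝕜 f) (x : E) :
    polarization 𝕜 f x x = (2 : 𝕜) • fderiv 𝕜 f x := by
  rw [← hf.fderiv_fderiv]
  simpa using (hf.homogeneous.fderiv hf.differentiable).fderiv_apply_self
    (hf.contDiff_fderiv.differentiable WithTop.top_ne_zero) x

theorem polarization_apply_self (hf : IsCubicForm 𝕜 f) (x y : E) :
    polarization 𝕜 f x y x = 2 * fderiv 𝕜 f x y := by
  rw [hf.polarization_apply_comm, hf.polarization_self, smul_apply, smul_eq_mul]

theorem polarization_self_right (hf : IsCubicForm 𝕜 f) (x y : E) :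
    polarization 𝕜 f x y y = 2 * fderiv 𝕜 f y x := by
  rw [hf.polarization_comm, hf.polarization_apply_self]

theorem polarization_self_self (hf : IsCubicForm 𝕜 f) (x : E) :
    polarization 𝕜 f x x x = 6 * f x := by
  rw [hf.polarization_self_right, hf.fderiv_apply_self]
  ring

theorem map_smul_add_smul [CharZero 𝕜] (hf : IsCubicForm 𝕜 f) (s t : 𝕜) (x y : E) :
    f (s • x + t • y) =
      s ^ 3 * f x + s ^ 2 * t * fderiv 𝕜 f x y + s * t ^ 2 * fderiv 𝕜 f y x + t ^ 3 * f y := by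
  have hxxy : polarization 𝕜 f x x y = 2 * fderiv 𝕜 f x y := by
    rw [hf.polarization_self, smul_apply, smul_eq_mul]
  have hyyx : polarization 𝕜 f y y x = 2 * fderiv 𝕜 f y x := by
    rw [hf.polarization_self, smul_apply, smul_eq_mul]
  have expand := hf.polarization_self_self (s • x + t • y)
  simp only [map_add, map_smul, add_apply, smul_apply, smul_eq_mul, hxxy, hyyx,
    hf.polarization_comm y x, hf.polarization_apply_self x y, hf.polarization_self_right x y,
    hf.polarization_self_self x, hf.polarization_self_self y] at expand
  apply mul_left_cancel₀ (by norm_num : (6 : 𝕜) ≠ 0)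
  linear_combination -expand

theorem tau_apply (hf : IsCubicForm 𝕜 f) {A : E} (hA : f A ≠ 0) (x : E) :
    tau 𝕜 f A x =
      (f A)⁻¹ • polarization 𝕜 f A x - ((f A ^ 2)⁻¹ * fderiv 𝕜 f A x) • fderiv 𝕜 f A := by
  have hinv : HasFDerivAt (fun y => (f y)⁻¹) (-(f A ^ 2)⁻¹ • fderiv 𝕜 f A) A :=
    (hasDerivAt_inv hA).comp_hasFDerivAt A (hf.differentiable A).hasFDerivAt
  have hlog : tau 𝕜 f A = _ := (hinv.smul (hf.hasFDerivAt_fderiv A)).fderiv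
  rw [hlog]
  ext z
  simp only [add_apply, sub_apply, smul_apply, ContinuousLinearMap.smulRight_apply, smul_eq_mul]
  ring

end IsCubicForm

end Cubic

section Legendre

set_option maxSynthPendingDepth 3

variable {𝕜 V : Type*} [NontriviallyNormedField 𝕜] [NormedAddCommGroup V] [NormedSpace 𝕜 V]
  {f : V → 𝕜} {fstar : (V →L[𝕜] 𝕜) → 𝕜} {A : V}

variable (𝕜) in
/-- `f_*` is a multiplicative Legendre transform of the cubic form `f`: a cubic form on the dual
with `f_* ∘ (f' / f) = 1 / f`. That `f' / f` has an inverse is recorded only to first order, and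
only as surjectivity of its derivatives. -/
structure IsMulLegendreTransform (f : V → 𝕜) (fstar : (V →L[𝕜] 𝕜) → 𝕜) : Prop where
  isCubicForm : IsCubicForm 𝕜 f
  isCubicForm_dual : IsCubicForm 𝕜 fstar
  apply_logGradient : ∀ x, f x ≠ 0 → fstar (logGradient 𝕜 f x) = (f x)⁻¹
  surjective_tau : ∀ A, f A ≠ 0 → Function.Surjective (tau 𝕜 f A)

theorem surjective_toDual_of_injective [CompleteSpace 𝕜] [FiniteDimensional 𝕜 V]
    {T : V →L[𝕜] V →L[𝕜] 𝕜} (hT : Function.Injective T) : Function.Surjective T := by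
  have hfinrank : Module.finrank 𝕜 V = Module.finrank 𝕜 (V →L[𝕜] 𝕜) := by
    rw [← LinearMap.toContinuousLinearMap.finrank_eq, Subspace.dual_finrank_eq]
  exact (LinearMap.injective_iff_surjective_of_finrank_eq_finrank hfinrank
    (f := T.toLinearMap)).1 hT

namespace IsMulLegendreTransform

theorem of_injective_tau [CompleteSpace 𝕜] [FiniteDimensional 𝕜 V] (hf : IsCubicForm 𝕜 f)
    (hfstar : IsCubicForm 𝕜 fstar)
    (hlog : ∀ x, f x ≠ 0 → fstar (logGradient 𝕜 f x) = (f x)⁻¹)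
    (hinj : ∀ A, f A ≠ 0 → Function.Injective (tau 𝕜 f A)) :
    IsMulLegendreTransform 𝕜 f fstar :=
  ⟨hf, hfstar, hlog, fun A hA => surjective_toDual_of_injective (hinj A hA)⟩

theorem eventually_ne (h : IsMulLegendreTransform 𝕜 f fstar) (hA : f A ≠ 0) :
    ∀ᶠ y in 𝓝 A, f y ≠ 0 :=
  h.isCubicForm.contDiff.continuous.continuousAt.eventually_ne hA

theorem apply_fderiv (h : IsMulLegendreTransform 𝕜 f fstar) (hA : f A ≠ 0) :
    fstar (fderiv 𝕜 f A) = f A ^ 2 := by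
  have hlog := h.apply_logGradient A hA
  rw [logGradient, h.isCubicForm_dual.homogeneous _ (inv_ne_zero hA), smul_eq_mul] at hlog
  field_simp at hlog
  exact hlog

theorem surjective_polarization [CharZero 𝕜] (h : IsMulLegendreTransform 𝕜 f fstar)
    (hA : f A ≠ 0) : Function.Surjective (polarization 𝕜 f A) := by
  intro η
  obtain ⟨v, rfl⟩ := h.surjective_tau A hA η
  refine ⟨(f A)⁻¹ • v - ((f A ^ 2)⁻¹ * fderiv 𝕜 f A v / 2) • A, ?_⟩
  rw [h.isCubicForm.tau_apply hA, map_sub, map_smul, map_smul, h.isCubicForm.polarization_self,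
    smul_smul, div_mul_cancel₀ _ two_ne_zero]

theorem fderiv_fderiv_apply [CharZero 𝕜] (h : IsMulLegendreTransform 𝕜 f fstar) (hA : f A ≠ 0)
    (η : V →L[𝕜] 𝕜) : fderiv 𝕜 fstar (fderiv 𝕜 f A) η = f A * η A := by
  have hf := h.isCubicForm
  obtain ⟨v, rfl⟩ := h.surjective_polarization hA η
  have hleft := (h.isCubicForm_dual.differentiable (fderiv 𝕜 f A)).hasFDerivAt.comp A
    (hf.hasFDerivAt_fderiv A)
  have hright := (hf.differentiable A).hasFDerivAt.pow 2
  have heq : fstar ∘ fderiv 𝕜 f =ᶠ[𝓝 A] fun y => f y ^ 2 :=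
    (h.eventually_ne hA).mono fun y hy => h.apply_fderiv hy
  have hv := DFunLike.congr_fun (hleft.unique (hright.congr_of_eventuallyEq heq)) v
  rw [hf.polarization_apply_comm, hf.polarization_self]
  simp only [ContinuousLinearMap.comp_apply, Nat.add_one_sub_one, pow_one, nsmul_eq_mul,
    Nat.cast_ofNat, smul_apply, smul_eq_mul] at hv ⊢
  linear_combination hv

theorem polarization_fderiv_apply [CharZero 𝕜] (h : IsMulLegendreTransform 𝕜 f fstar)
    (hA : f A ≠ 0) (x : V) (η : V →L[𝕜] 𝕜) :
    polarization 𝕜 fstar (fderiv 𝕜 f A) (polarization 𝕜 f A x) η =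
      fderiv 𝕜 f A x * η A + f A * η x := by
  have hleft := ((h.isCubicForm_dual.hasFDerivAt_fderiv (fderiv 𝕜 f A)).comp A
    (h.isCubicForm.hasFDerivAt_fderiv A)).clm_apply (hasFDerivAt_const η A)
  have hright := (h.isCubicForm.differentiable A).hasFDerivAt.mul η.hasFDerivAt
  have heq : (fun y => fderiv 𝕜 fstar (fderiv 𝕜 f y) η) =ᶠ[𝓝 A] fun y => f y * η y :=
    (h.eventually_ne hA).mono fun y hy => h.fderiv_fderiv_apply hy η
  have hx := DFunLike.congr_fun (hleft.unique (hright.congr_of_eventuallyEq heq)) x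
  simp only [Function.comp_apply, ContinuousLinearMap.comp_zero, zero_add,
    ContinuousLinearMap.flip_apply, ContinuousLinearMap.comp_apply, add_apply, smul_apply,
    smul_eq_mul] at hx
  linear_combination hx

theorem polarization_polarization_apply [CharZero 𝕜] (h : IsMulLegendreTransform 𝕜 f fstar)
    (hA : f A ≠ 0) (x : V) (η : V →L[𝕜] 𝕜) :
    polarization 𝕜 fstar (polarization 𝕜 f A x) (polarization 𝕜 f A x) η +
        2 * polarization 𝕜 fstar (fderiv 𝕜 f A) (fderiv 𝕜 f x) η =
      2 * (fderiv 𝕜 f x A * η A + fderiv 𝕜 f A x * η x) := by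
  have hf := h.isCubicForm
  have hfst : HasFDerivAt (fun y => polarization 𝕜 fstar (fderiv 𝕜 f y))
      ((polarization 𝕜 fstar).comp (polarization 𝕜 f A)) A :=
    (polarization 𝕜 fstar).hasFDerivAt.comp A (hf.hasFDerivAt_fderiv A)
  have hsnd : HasFDerivAt (fun y => polarization 𝕜 f x y) (polarization 𝕜 f x) A :=
    (polarization 𝕜 f x).hasFDerivAt
  have hleft := (hfst.clm_apply hsnd).clm_apply (hasFDerivAt_const η A)
  have hright := (((hf.hasFDerivAt_fderiv A).clm_apply (hasFDerivAt_const x A)).mul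
    η.hasFDerivAt).add ((hf.differentiable A).hasFDerivAt.mul_const (η x))
  have heq : (fun y => polarization 𝕜 fstar (fderiv 𝕜 f y) (polarization 𝕜 f x y) η) =ᶠ[𝓝 A]
      fun y => fderiv 𝕜 f y x * η y + f y * η x := by
    filter_upwards [h.eventually_ne hA] with y hy
    rw [hf.polarization_comm x y, h.polarization_fderiv_apply hy]
  have hx := DFunLike.congr_fun (hleft.unique (hright.congr_of_eventuallyEq heq)) x
  simp only [hf.polarization_comm x A, ContinuousLinearMap.comp_zero, ContinuousLinearMap.flip_add,
    add_apply, zero_add, ContinuousLinearMap.flip_apply, ContinuousLinearMap.comp_apply,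
    hf.polarization_self x, map_smul, smul_apply, smul_eq_mul, hf.polarization_self_right] at hx
  linear_combination hx

theorem apply_polarization [CharZero 𝕜] (h : IsMulLegendreTransform 𝕜 f fstar) (hA : f A ≠ 0)
    (x : V) :
    fstar (polarization 𝕜 f A x) = fderiv 𝕜 f A x * fderiv 𝕜 f x A - f A * f x := by
  have hf := h.isCubicForm
  have hmixed := h.polarization_fderiv_apply hA x (fderiv 𝕜 f x)
  have hself := h.polarization_polarization_apply hA x (polarization 𝕜 f A x)
  rw [h.isCubicForm_dual.polarization_apply_comm] at hmixed
  rw [h.isCubicForm_dual.polarization_self_self, hmixed, hf.polarization_apply_self,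
    hf.polarization_self_right, hf.fderiv_apply_self] at hself
  apply mul_left_cancel₀ (by norm_num : (6 : 𝕜) ≠ 0)
  linear_combination hself

theorem apply_tau [CharZero 𝕜] (h : IsMulLegendreTransform 𝕜 f fstar) (hA : f A ≠ 0) (x : V) :
    fstar (tau 𝕜 f A x) = -(f A ^ 2)⁻¹ * f x := by
  have hf := h.isCubicForm
  have hba : fderiv 𝕜 fstar (polarization 𝕜 f A x) (fderiv 𝕜 f A) =
      fderiv 𝕜 f A x ^ 2 + f A * fderiv 𝕜 f x A := by
    have hlin := h.polarization_fderiv_apply hA x (polarization 𝕜 f A x)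
    rw [h.isCubicForm_dual.polarization_self_right, hf.polarization_apply_self,
      hf.polarization_self_right] at hlin
    apply mul_left_cancel₀ (two_ne_zero (α := 𝕜))
    linear_combination hlin
  rw [hf.tau_apply hA, sub_eq_add_neg, ← neg_smul, h.isCubicForm_dual.map_smul_add_smul,
    h.apply_polarization hA, hba, h.fderiv_fderiv_apply hA, hf.polarization_apply_self,
    h.apply_fderiv hA]
  field_simp
  ring

end IsMulLegendreTransform

end Legendre

theorem stmt18_general {𝕜 V : Type*} [NontriviallyNormedField 𝕜] [CharZero 𝕜]
    [NormedAddCommGroup V] [NormedSpace 𝕜 V] {f : V → 𝕜} {fstar : (V →L[𝕜] 𝕜) → 𝕜}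
    (h : IsMulLegendreTransform 𝕜 f fstar) {A A' : V} (hA : f A ≠ 0) (hA' : f A' ≠ 0)
    {S : (V →L[𝕜] 𝕜) → V} (hS : Function.LeftInverse S (tau 𝕜 f A')) (x : V) :
    f (S (tau 𝕜 f A x)) = (f A' / f A) ^ 2 * f x := by
  obtain ⟨w, hw⟩ := h.surjective_tau A' hA' (tau 𝕜 f A x)
  have hfstar : -(f A' ^ 2)⁻¹ * f w = -(f A ^ 2)⁻¹ * f x := by
    rw [← h.apply_tau hA', hw, h.apply_tau hA]
  rw [← hw, hS w]
  field_simp at hfstar ⊢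
  linear_combination -hfstar

/-- Let `f` be a homogeneous cubic admitting a polynomial
multiplicative Legendre transform `f_*` (a homogeneous cubic on `V*` with
gradient `g`), with `f_*(f'(x)/f(x)) = 1/f(x)` and `(f_*'/f_*)∘(f'/f) = id` on
`{f ≠ 0}`; so `τ_{f,A} = d_A(f'/f)` is invertible with inverse
`τ_{f_*, f'(A)/f(A)}`.  Assuming (as one may) that each `τ_{f,A}` maps the cone
over `{f = 0}` onto the cone over `{f_* = 0}`, for any `A, A'` with
`f(A) ≠ 0 ≠ f(A')` the composite `(τ_{f,A'})⁻¹ ∘ τ_{f,A} ∈ GL(V)` lies in the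
group `G = {g : f ∘ g = χ(g)·f, χ(g) ≠ 0}`, i.e. preserves the affine cone over
`{f = 0}`. -/
theorem stmt18 {V : Type*} [NormedAddCommGroup V] [NormedSpace ℂ V]
    [FiniteDimensional ℂ V]
    (f : V → ℂ) (hf : ContDiff ℂ ⊤ f)
    (hfhom : ∀ (c : ℂ) (x : V), f (c • x) = c ^ 3 * f x)
    (fstar : (V →L[ℂ] ℂ) → ℂ) (hfs : ContDiff ℂ ⊤ fstar)
    (hfshom : ∀ (c : ℂ) (ξ : V →L[ℂ] ℂ), fstar (c • ξ) = c ^ 3 * fstar ξ)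
    (g : (V →L[ℂ] ℂ) → V) (hg : ContDiff ℂ ⊤ g)
    (hghom : ∀ (c : ℂ) (ξ : V →L[ℂ] ℂ), g (c • ξ) = c ^ 2 • g ξ)
    (hdef : ∀ x : V, f x ≠ 0 → fstar ((f x)⁻¹ • fderiv ℂ f x) = (f x)⁻¹)
    (hlog : ∀ x : V, f x ≠ 0 →
      (fstar ((f x)⁻¹ • fderiv ℂ f x))⁻¹ • g ((f x)⁻¹ • fderiv ℂ f x) = x)
    (hinv : ∀ A : V, f A ≠ 0 →
      (fderiv ℂ (fun ξ : V →L[ℂ] ℂ => (fstar ξ)⁻¹ • g ξ)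
          ((f A)⁻¹ • fderiv ℂ f A)).comp
        (fderiv ℂ (fun x : V => (f x)⁻¹ • fderiv ℂ f x) A)
        = ContinuousLinearMap.id ℂ V)
    (hcone : ∀ A : V, f A ≠ 0 → ∀ x : V,
      f x = 0 ↔ fstar (fderiv ℂ (fun y : V => (f y)⁻¹ • fderiv ℂ f y) A x) = 0) :
    ∀ A A' : V, f A ≠ 0 → f A' ≠ 0 →
      ∃ χ : ℂ, χ ≠ 0 ∧ ∀ x : V,
        f ((fderiv ℂ (fun ξ : V →L[ℂ] ℂ => (fstar ξ)⁻¹ • g ξ)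
              ((f A')⁻¹ • fderiv ℂ f A'))
            (fderiv ℂ (fun y : V => (f y)⁻¹ • fderiv ℂ f y) A x))
          = χ * f x := by
  have h : IsMulLegendreTransform ℂ f fstar :=
    .of_injective_tau ⟨hf, fun c _ => hfhom c⟩ ⟨hfs, fun c _ => hfshom c⟩ hdef fun A hA =>
      Function.LeftInverse.injective (DFunLike.congr_fun (hinv A hA))
  exact fun A A' hA hA' => ⟨(f A' / f A) ^ 2, by positivity,
    stmt18_general h hA hA' (DFunLike.congr_fun (hinv A' hA'))⟩
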